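/- Let p be any prime number. Then the 2-primary part (Sylow 2-subgroup) of the ideal class group of the pure quartic field K = ℚ(⁴√p) is a cyclic group. -/

import Mathlib

open Polynomial NumberField


namespace PQ
open IsDedekindDomain

/-- The subgroup of squares. -/
def Sq (G : Type*) [CommGroup G] : Subgroup G := (powMonoidHom 2 : G →* G).range

theorem mem_Sq {G : Type*} [CommGroup G] {a : G} : a ∈ Sq G ↔ ∃ b, b ^ 2 = a := by
  simp [Sq, MonoidHom.mem_range]

/-- Elements whose valuation is even outside `T`. -/
def Sel (F : Type*) [Field F] [NumberField F] (T : Set (HeightOneSpectrum (𝓞 F))) :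
    Subgroup Fˣ where
  carrier := {a | ∀ v, v ∉ T → IsSquare (v.valuation F (a : F))}
  one_mem' := by intro v _; simp
  mul_mem' := by
    intro a b ha hb v hv
    simpa using (ha v hv).mul (hb v hv)
  inv_mem' := by
    intro a ha v hv
    simpa using (ha v hv).inv

theorem mem_Sel {F : Type*} [Field F] [NumberField F] {T : Set (HeightOneSpectrum (𝓞 F))}
    {a : Fˣ} : a ∈ Sel F T ↔ ∀ v, v ∉ T → IsSquare (v.valuation F (a : F)) := Iff.rfl

theorem Sq_le_Sel (F : Type*) [Field F] [NumberField F] (T : Set (HeightOneSpectrum (𝓞 F))) :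
    Sq Fˣ ≤ Sel F T := by
  intro a ha
  obtain ⟨b, rfl⟩ := mem_Sq.1 ha
  intro v _
  exact ⟨v.valuation F b, by simp [sq]⟩

theorem isSquare_mul_of_not {x y : WithZero (Multiplicative ℤ)}
    (hx : ¬ IsSquare x) (hy : ¬ IsSquare y) : IsSquare (x * y) := by
  have key : ∀ z : WithZero (Multiplicative ℤ), ¬ IsSquare z → ∃ n : ℤ, z = WithZero.exp (2 * n + 1) := by
    intro z hz
    have hz0 : z ≠ 0 := by rintro rfl; exact hz ⟨0, by simp⟩
    rcases Int.even_or_odd' (WithZero.log z) with ⟨k, hk | hk⟩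
    · exfalso
      apply hz
      refine ⟨WithZero.exp k, ?_⟩
      rw [← WithZero.exp_add, ← two_mul, ← hk, WithZero.exp_log hz0]
    · exact ⟨k, by rw [← hk, WithZero.exp_log hz0]⟩
  obtain ⟨n, rfl⟩ := key x hx
  obtain ⟨m, rfl⟩ := key y hy
  refine ⟨WithZero.exp (n + m + 1), ?_⟩
  rw [← WithZero.exp_add, ← WithZero.exp_add]
  congr 1; ring

theorem isSquare_exp_iff {n : ℤ} : IsSquare (WithZero.exp n : WithZero (Multiplicative ℤ)) ↔ Even n := by
  constructor
  · rintro ⟨z, hz⟩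
    have hz0 : z ≠ 0 := by rintro rfl; simp at hz
    refine ⟨WithZero.log z, ?_⟩
    have := congrArg WithZero.log hz
    rwa [WithZero.log_exp, WithZero.log_mul hz0 hz0] at this
  · rintro ⟨k, rfl⟩
    exact ⟨WithZero.exp k, by rw [← WithZero.exp_add]⟩

theorem multiset_half {α : Type*} (s : Multiset α) [DecidableEq α] (h : ∀ x, Even (s.count x)) :
    ∃ t : Multiset α, s = 2 • t := by
  refine ⟨∑ x ∈ s.toFinset, (s.count x / 2) • {x}, ?_⟩
  ext x
  simp only [Multiset.count_nsmul, Multiset.count_sum', Multiset.count_singleton]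
  by_cases hx : x ∈ s
  · simp [hx]
    rw [Nat.mul_div_cancel' (h x).two_dvd]
  · simp [hx, Multiset.count_eq_zero_of_notMem]

theorem sel_ideal {F : Type*} [Field F] [NumberField F] {a : 𝓞 F} (ha : a ≠ 0) :
    (∀ v : HeightOneSpectrum (𝓞 F), IsSquare (v.valuation F (a : F))) ↔
      ∃ I : Ideal (𝓞 F), Ideal.span {a} = I ^ 2 := by
  have hsp : Ideal.span {a} ≠ (⊥ : Ideal (𝓞 F)) := by simpa using ha
  constructor
  · intro h
    classical
    have : ∀ I : Ideal (𝓞 F), Even ((UniqueFactorizationMonoid.normalizedFactors (Ideal.span {a})).count I) := by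
      intro I
      by_cases hI : I ∈ UniqueFactorizationMonoid.normalizedFactors (Ideal.span {a})
      · have hp := UniqueFactorizationMonoid.prime_of_normalized_factor I hI
        let v : HeightOneSpectrum (𝓞 F) := ⟨I, Ideal.isPrime_of_prime hp, hp.ne_zero⟩
        have h1 := h v
        rw [HeightOneSpectrum.valuation_of_algebraMap,
          HeightOneSpectrum.intValuation_eq_exp_neg_multiplicity v ha, isSquare_exp_iff] at h1
        have h2 : Even (multiplicity I (Ideal.span {a})) := by
          have := h1.neg
          simpa using this
        have h3 := UniqueFactorizationMonoid.emultiplicity_eq_count_normalizedFactors hp.irreducible hsp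
        rw [normalize_eq] at h3
        rw [multiplicity_eq_of_emultiplicity_eq_some h3] at h2
        exact h2
      · rw [Multiset.count_eq_zero_of_notMem hI]; simp
    obtain ⟨t, ht⟩ := multiset_half _ this
    refine ⟨t.prod, ?_⟩
    rw [← Multiset.prod_nsmul, ← ht]
    exact (Ideal.prod_normalizedFactors_eq_self hsp).symm
  · rintro ⟨I, hI⟩ v
    rw [HeightOneSpectrum.valuation_of_algebraMap,
      HeightOneSpectrum.intValuation_eq_exp_neg_multiplicity v ha, isSquare_exp_iff, hI]
    have hI0 : I ≠ 0 := by rintro rfl; simp at hI; exact ha hI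
    rw [even_neg]
    have : multiplicity v.asIdeal (I^2) = 2 * multiplicity v.asIdeal I := by
      rw [FiniteMultiplicity.multiplicity_pow v.prime]
      exact FiniteMultiplicity.of_prime_left v.prime hI0
    rw [this]; simp

/-- Representing elements of `Fˣ` by integers up to squares. -/
theorem exists_int_rep {F : Type*} [Field F] [NumberField F] (a : Fˣ) :
    ∃ (b : 𝓞 F) (c : Fˣ), b ≠ 0 ∧ (b : F) = a * c ^ 2 := by
  obtain ⟨x, y, hy, h⟩ := IsFractionRing.div_surjective (A := 𝓞 F) (a : F)
  have hy0 : (y : F) ≠ 0 := by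
    simpa using nonZeroDivisors.ne_zero hy
  have hb : ((x * y : 𝓞 F) : F) = a * (y : F) ^ 2 := by
    rw [← h]; push_cast; field_simp
  refine ⟨x * y, Units.mk0 (y : F) hy0, ?_, by simpa using hb⟩
  intro h0
  rw [h0] at hb
  simp [hy0] at hb
  
end PQ


namespace PQ
open IsDedekindDomain

/-- `L = F(θ)` with `θ² = r` not a square in `F`. -/
structure Quad (F L : Type*) [Field F] [Field L] [Algebra F L] (θ : L) (r : F) : Prop where
  sq : θ ^ 2 = algebraMap F L r
  gen : ∀ α : L, ∃ x y : F, α = algebraMap F L x + algebraMap F L y * θ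
  ns : ¬ IsSquare r

section field
variable {F L : Type*} [Field F] [Field L] [Algebra F L] {θ : L} {r : F}

theorem Quad.indep (h : Quad F L θ r) {x y : F}
    (hxy : algebraMap F L x + algebraMap F L y * θ = 0) : x = 0 ∧ y = 0 := by
  have hy : y = 0 := by
    by_contra hy
    apply h.ns
    refine ⟨x / y, ?_⟩
    apply (algebraMap F L).injective
    have hy' : algebraMap F L y ≠ 0 := by simpa using hy
    rw [← h.sq, map_mul, map_div₀]
    field_simp
    linear_combination (algebraMap F L y * θ - algebraMap F L x) * hxy
  subst hy
  simp at hxy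
  exact ⟨hxy, rfl⟩

/-- The basis `1, θ`. -/
theorem Quad.exists_basis (h : Quad F L θ r) : ∃ b : Module.Basis (Fin 2) F L, b 0 = 1 ∧ b 1 = θ := by
  have hli : LinearIndependent F ![(1 : L), θ] := by
    rw [LinearIndependent.pair_iff]
    intro s t hst
    apply h.indep
    simpa [Algebra.smul_def] using hst
  have hsp : ⊤ ≤ Submodule.span F (Set.range ![(1 : L), θ]) := by
    intro α _
    obtain ⟨x, y, rfl⟩ := h.gen α
    simp only [Matrix.range_cons, Matrix.range_empty, Set.union_empty, Set.singleton_union]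
    rw [Submodule.mem_span_pair]
    exact ⟨x, y, by simp [Algebra.smul_def]⟩
  exact ⟨Module.Basis.mk hli hsp, by simp, by simp⟩

theorem Quad.finrank (h : Quad F L θ r) : Module.finrank F L = 2 := by
  obtain ⟨b, -, -⟩ := h.exists_basis
  simpa using Module.finrank_eq_card_basis b

theorem Quad.norm (h : Quad F L θ r) (x y : F) :
    Algebra.norm F (algebraMap F L x + algebraMap F L y * θ) = x ^ 2 - r * y ^ 2 := by
  obtain ⟨b, h0, h1⟩ := h.exists_basis
  have e0 : (algebraMap F L x + algebraMap F L y * θ) * b 0 = x • b 0 + y • b 1 := by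
    rw [h0, h1]; simp [Algebra.smul_def]
  have e1 : (algebraMap F L x + algebraMap F L y * θ) * b 1 = (r * y) • b 0 + x • b 1 := by
    rw [h0, h1]; simp only [Algebra.smul_def, map_mul, ← h.sq]; ring
  rw [Algebra.norm_eq_matrix_det b, Matrix.det_fin_two]
  simp only [Algebra.leftMulMatrix_eq_repr_mul, e0, e1]
  simp
  ring

theorem Quad.nm_sq (h : Quad F L θ r) (h2 : (2 : F) ≠ 0) (α : Lˣ) (hα : Units.map (Algebra.norm F) α ∈ Sq Fˣ) :
    ∃ (a : Fˣ) (β : Lˣ), α = Units.map (algebraMap F L).toMonoidHom a * β ^ 2 := by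
  obtain ⟨b, hb⟩ := mem_Sq.1 hα
  obtain ⟨x, y, hxy⟩ := h.gen α
  have hN : x ^ 2 - r * y ^ 2 = (b : F) ^ 2 := by
    have := congrArg (Units.val) hb
    simp only [Units.val_pow_eq_pow_val, Units.coe_map, MonoidHom.coe_coe] at this
    rw [this, hxy, h.norm]
  have key : ∀ c : F, c ^ 2 = (b : F) ^ 2 → x + c ≠ 0 →
      ∃ (a : Fˣ) (β : Lˣ), α = Units.map (algebraMap F L).toMonoidHom a * β ^ 2 := by
    intro c hc hxc
    have hxc2 : 2 * (x + c) ≠ 0 := mul_ne_zero h2 hxc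
    have e : algebraMap F L (2 * (x + c)) * α =
        (algebraMap F L (x + c) + algebraMap F L y * θ) ^ 2 := by
      have e1 : algebraMap F L (x ^ 2 - r * y ^ 2) = algebraMap F L (c ^ 2) := by rw [hN, hc]
      simp only [map_sub, map_mul, map_pow, ← h.sq] at e1
      rw [hxy]
      simp only [map_mul, map_add, map_ofNat]
      linear_combination e1
    have hne : algebraMap F L (x + c) + algebraMap F L y * θ ≠ 0 := by
      intro h0
      exact hxc (h.indep h0).1
    refine ⟨(Units.mk0 _ hxc2)⁻¹, Units.mk0 _ hne, ?_⟩
    ext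
    simp only [Units.val_mul, Units.val_pow_eq_pow_val, Units.val_mk0, ← e, map_inv, Units.val_inv_eq_inv_val,
      Units.coe_map]
    have : algebraMap F L (2 * (x + c)) ≠ 0 := (_root_.map_ne_zero _).2 hxc2
    simp only [RingHom.toMonoidHom_eq_coe, MonoidHom.coe_coe, Units.val_mk0]
    field_simp
  by_cases hx : x + b = 0
  · apply key (-b) (by ring)
    intro h0
    have : 2 * (b : F) = 0 := by linear_combination hx - h0
    simp [h2] at this
  · exact key b rfl hx
end field

section nf
variable {F L : Type*} [Field F] [Field L] [NumberField F] [NumberField L] [Algebra F L]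

theorem nm_mem (α : Lˣ) (hα : α ∈ Sel L ∅) : Units.map (Algebra.norm F) α ∈ Sel F ∅ := by
  obtain ⟨b, c, hb0, hb⟩ := exists_int_rep α
  have hbu : Units.mk0 (b : L) (by simpa using hb0) = α * c ^ 2 := by ext; simpa using hb
  have hbS : Units.mk0 (b : L) (by simpa using hb0) ∈ Sel L ∅ := by
    rw [hbu]
    exact mul_mem hα (Sq_le_Sel _ _ (mem_Sq.2 ⟨c, rfl⟩))
  obtain ⟨I, hI⟩ := (sel_ideal hb0).1 (fun v => hbS v (by simp))
  have hr := congrArg (Ideal.relNorm (𝓞 F)) hI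
  rw [Ideal.relNorm_singleton, map_pow] at hr
  have hn0 : Algebra.intNorm (𝓞 F) (𝓞 L) b ≠ 0 := by
    rw [Ne, Algebra.intNorm_eq_zero]; exact hb0
  have hN := (sel_ideal hn0).2 ⟨_, hr⟩
  have e : ((Algebra.intNorm (𝓞 F) (𝓞 L) b : 𝓞 F) : F) = Algebra.norm F (b : L) :=
    Algebra.algebraMap_intNorm b
  have hm : Units.map (Algebra.norm F) α * (Units.map (Algebra.norm F) c) ^ 2 ∈ Sel F ∅ := by
    rw [← map_pow, ← map_mul, ← hbu]
    intro v _
    have := hN v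
    rw [e] at this
    simpa using this
  rwa [Subgroup.mul_mem_cancel_right _ (Sq_le_Sel _ _ (mem_Sq.2 ⟨_, rfl⟩))] at hm

theorem even_of_disc {θ : L} {r : F} (h : Quad F L θ r) (z : 𝓞 L) (s n : 𝓞 F)
    (hz : z ^ 2 = algebraMap _ _ s * z - algebraMap _ _ n)
    (hzF : ∀ x : F, algebraMap F L x ≠ z)
    (v : HeightOneSpectrum (𝓞 F)) (hv : s ^ 2 - 4 * n ∉ v.asIdeal)
    (a : Fˣ) (ha : Units.map (algebraMap F L).toMonoidHom a ∈ Sel L ∅) :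
    IsSquare (v.valuation F (a : F)) := by
  obtain ⟨P, hP1, hP2⟩ := Ideal.nonempty_primesOver (S := 𝓞 L) (P := v.asIdeal)
  have hPb : P ≠ ⊥ := Ideal.ne_bot_of_liesOver_of_ne_bot v.ne_bot P
  let w : HeightOneSpectrum (𝓞 L) := ⟨P, hP1, hPb⟩
  haveI : w.asIdeal.LiesOver v.asIdeal := hP2
  have hw := ha w (by simp)
  have hval := HeightOneSpectrum.valuation_liesOver L v w (a : F)
  have hmin : minpoly (𝓞 F) z = X ^ 2 - C s * X + C n := by
    symm
    have hmonic : (X ^ 2 - C s * X + C n : (𝓞 F)[X]).Monic := by monicity!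
    apply IsIntegrallyClosed.minpoly.unique
    · exact hmonic
    · simp [hz]
    · intro q hq hqz
      by_contra hlt
      have hd : (X ^ 2 - C s * X + C n : (𝓞 F)[X]).degree = 2 := by compute_degree!
      rw [hd] at hlt
      have hq1 : q.natDegree ≤ 1 := by
        have h1 : q.degree < 2 := not_le.1 hlt
        have := (Polynomial.degree_eq_natDegree hq.ne_zero) ▸ h1
        have : q.natDegree < 2 := by exact_mod_cast this
        omega
      have hq2 : q.coeff 1 = 1 := by
        rcases Nat.lt_or_ge q.natDegree 1 with h0 | h1
        · have : q = 1 := hq.natDegree_eq_zero.1 (by omega)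
          simp [this] at hqz
        · have h2 := hq.coeff_natDegree
          rwa [le_antisymm hq1 h1] at h2
      rw [Polynomial.eq_X_add_C_of_natDegree_le_one hq1, hq2] at hqz
      simp at hqz
      apply hzF (-(q.coeff 0 : F))
      have := congrArg (algebraMap (𝓞 L) L) (eq_neg_of_add_eq_zero_left hqz)
      refine Eq.trans ?_ this.symm
      simp only [map_neg]
      congr 1
  have htop : Algebra.adjoin F {algebraMap (𝓞 L) L z} = ⊤ := by
    rw [eq_top_iff]
    intro α _
    obtain ⟨x, y, hxy⟩ := h.gen (algebraMap (𝓞 L) L z)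
    have hy : y ≠ 0 := by
      rintro rfl
      apply hzF x
      simp at hxy
      exact hxy.symm
    have hth : θ = algebraMap F L y⁻¹ * (algebraMap (𝓞 L) L z - algebraMap F L x) := by
      have : algebraMap F L y ≠ 0 := by simpa using hy
      rw [hxy, map_inv₀]; field_simp; ring
    have hzm : algebraMap (𝓞 L) L z ∈ Algebra.adjoin F {algebraMap (𝓞 L) L z} :=
      Algebra.self_mem_adjoin_singleton _ _
    have htm : θ ∈ Algebra.adjoin F {algebraMap (𝓞 L) L z} := by
      rw [hth]
      exact mul_mem (Subalgebra.algebraMap_mem _ _) (sub_mem hzm (Subalgebra.algebraMap_mem _ _))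
    obtain ⟨x', y', rfl⟩ := h.gen α
    exact add_mem (Subalgebra.algebraMap_mem _ _) (mul_mem (Subalgebra.algebraMap_mem _ _) htm)
  have hdiff := aeval_derivative_mem_differentIdeal (𝓞 F) F L z htop
  rw [hmin] at hdiff
  simp only [derivative_add, derivative_sub, derivative_X_pow, derivative_C_mul, derivative_X, derivative_C] at hdiff
  simp only [Nat.cast_ofNat, map_ofNat, Nat.add_one_sub_one, pow_one, mul_one, add_zero, map_sub, map_mul, aeval_X, aeval_C] at hdiff
  have he : v.asIdeal.ramificationIdx' w.asIdeal = 1 := by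
    by_contra hne
    have hle : Ideal.map (algebraMap (𝓞 F) (𝓞 L)) v.asIdeal ≤ P :=
      Ideal.map_le_iff_le_comap.2 hP2.over.le
    have h2 : Ideal.map (algebraMap (𝓞 F) (𝓞 L)) v.asIdeal ≤ P ^ 2 :=
      (Ideal.ramificationIdx'_ne_one_iff hle).1 hne
    have := pow_sub_one_dvd_differentIdeal (𝓞 F) P 2 v.ne_bot (Ideal.dvd_iff_le.2 h2)
    rw [Nat.add_one_sub_one, pow_one, Ideal.dvd_iff_le] at this
    have hm := this hdiff
    apply hv
    rw [hP2.over, Ideal.mem_comap]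
    have : algebraMap (𝓞 F) (𝓞 L) (s ^ 2 - 4 * n) = (2 * z - algebraMap (𝓞 F) (𝓞 L) s) * (2 * z - algebraMap (𝓞 F) (𝓞 L) s) := by
      simp only [map_sub, map_pow, map_mul, map_ofNat]
      linear_combination -4 * hz
    rw [this]
    exact Ideal.mul_mem_left _ _ hm
  rw [he, pow_one] at hval
  rw [hval]
  simpa using hw
end nf
end PQ


namespace PQ
open IsDedekindDomain

section one
variable {F : Type*} [Field F] [NumberField F]

theorem asIdeal_eq_span {r : 𝓞 F} (hr : (Ideal.absNorm (Ideal.span {r})).Prime)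
    (v : HeightOneSpectrum (𝓞 F)) (hv : r ∈ v.asIdeal) : v.asIdeal = Ideal.span {r} := by
  have hP : (Ideal.span {r}).IsPrime := Ideal.isPrime_of_irreducible_absNorm hr
  have h0 : Ideal.span {r} ≠ ⊥ := by
    intro h; rw [h] at hr; simp at hr; exact Nat.not_prime_zero hr
  have hM := hP.isMaximal h0
  exact (hM.eq_of_le v.isPrime.ne_top ((Ideal.span_singleton_le_iff_mem _).2 hv)).symm

theorem not_isSquare_val {r : 𝓞 F} (hr : (Ideal.absNorm (Ideal.span {r})).Prime)
    (v : HeightOneSpectrum (𝓞 F)) (hv : r ∈ v.asIdeal) : ¬ IsSquare (v.valuation F (r : F)) := by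
  have h0 : r ≠ 0 := by
    rintro rfl; simp at hr; exact Nat.not_prime_zero hr
  rw [HeightOneSpectrum.valuation_of_algebraMap, v.intValuation_singleton h0 (asIdeal_eq_span hr v hv),
    isSquare_exp_iff]
  decide

theorem not_isSquare_of_norm {r : 𝓞 F} (hr : (Ideal.absNorm (Ideal.span {r})).Prime) :
    ¬ IsSquare (r : F) := by
  rintro ⟨x, hx⟩
  have h0 : r ≠ 0 := by
    rintro rfl; simp at hr; exact Nat.not_prime_zero hr
  have hP : (Ideal.span {r}).IsPrime := Ideal.isPrime_of_irreducible_absNorm hr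
  have hb : Ideal.span {r} ≠ ⊥ := by simpa using h0
  let v : HeightOneSpectrum (𝓞 F) := ⟨Ideal.span {r}, hP, hb⟩
  apply not_isSquare_val hr v (Ideal.mem_span_singleton_self r)
  exact ⟨v.valuation F x, by rw [hx, map_mul]⟩

theorem sel_T {T : Set (HeightOneSpectrum (𝓞 F))} (hT : T.Subsingleton) :
    (Sel F ∅).relIndex (Sel F T) ∣ 2 := by
  rw [Subgroup.relIndex_dvd_two_iff]
  by_cases h : ∃ a ∈ Sel F T, a ∉ Sel F ∅
  · obtain ⟨a, haT, ha⟩ := h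
    refine ⟨a, haT, fun b hb => ?_⟩
    by_contra hcon
    push Not at hcon
    obtain ⟨h1, h2⟩ := hcon
    apply h1
    intro v _
    by_cases hv : v ∈ T
    · have key : ∀ c ∈ Sel F T, c ∉ Sel F ∅ → ¬ IsSquare (v.valuation F (c : F)) := by
        intro c hc hc' hs
        apply hc'
        intro w _
        by_cases hw : w ∈ T
        · rw [hT hw hv]; exact hs
        · exact hc w hw
      simpa using isSquare_mul_of_not (key b hb h2) (key a haT ha)
    · simpa using (hb v hv).mul (haT v hv)
  · push Not at h
    exact ⟨1, one_mem _, fun b hb => Or.inr (h b hb)⟩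

theorem sel_mono {T : Set (HeightOneSpectrum (𝓞 F))} : Sel F ∅ ≤ Sel F T :=
  fun _ ha v _ => ha v (by simp)
end one

section layer
variable {F L : Type*} [Field F] [Field L] [NumberField F] [NumberField L] [Algebra F L]

theorem layer {θ : L} {r : 𝓞 F} (h : Quad F L θ (r : F))
    (hr : (Ideal.absNorm (Ideal.span {r})).Prime)
    (T : Set (HeightOneSpectrum (𝓞 F)))
    (hram : ∀ v : HeightOneSpectrum (𝓞 F), v ∉ T → r ∉ v.asIdeal → ∀ a : Fˣ,
      Units.map (algebraMap F L).toMonoidHom a ∈ Sel L ∅ → IsSquare (v.valuation F (a : F)))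
    (n1 n2 : ℕ)
    (hn1 : (Sq Fˣ).relIndex ((Sel L ∅).map (Units.map (Algebra.norm F))) ≠ 0)
    (hn1' : (Sq Fˣ).relIndex ((Sel L ∅).map (Units.map (Algebra.norm F))) ≤ n1)
    (hn2 : (Sq Fˣ).relIndex (Sel F T) ≠ 0)
    (hn2' : (Sq Fˣ).relIndex (Sel F T) ≤ n2) :
    (Sq Lˣ).relIndex (Sel L ∅) ≠ 0 ∧ (Sq Lˣ).relIndex (Sel L ∅) ≤ n1 * n2 := by
  set ι : Fˣ →* Lˣ := Units.map (algebraMap F L).toMonoidHom with hι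
  set Nm : Lˣ →* Fˣ := Units.map (Algebra.norm F) with hNm
  have h2 : (2 : F) ≠ 0 := two_ne_zero
  have h0 : (r : F) ≠ 0 := by
    intro h0
    have : r = 0 := by simpa using h0
    subst this; simp at hr; exact Nat.not_prime_zero hr
  set M : Subgroup Lˣ := (Sq Fˣ).comap Nm ⊓ Sel L ∅ with hM
  have hQM : Sq Lˣ ≤ M := by
    refine le_inf ?_ (Sq_le_Sel _ _)
    intro x hx
    obtain ⟨y, rfl⟩ := mem_Sq.1 hx
    rw [Subgroup.mem_comap, mem_Sq]
    exact ⟨Nm y, by simp⟩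
  have e1 : (Sq Lˣ).relIndex M * M.relIndex (Sel L ∅) = (Sq Lˣ).relIndex (Sel L ∅) :=
    Subgroup.relIndex_mul_relIndex _ _ _ hQM inf_le_right
  have e2 : M.relIndex (Sel L ∅) = (Sq Fˣ).relIndex ((Sel L ∅).map Nm) := by
    rw [hM, Subgroup.inf_relIndex_right, Subgroup.relIndex_comap]
  have hιr : ι (Units.mk0 (r : F) h0) ∈ Sq Lˣ := by
    rw [mem_Sq]
    have hθ : θ ≠ 0 := by
      intro h1
      have h3 := h.sq
      rw [h1, zero_pow two_ne_zero] at h3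
      exact h0 ((map_eq_zero (algebraMap F L)).1 h3.symm)
    refine ⟨Units.mk0 θ hθ, ?_⟩
    ext
    simp [hι, h.sq]
  have e3 : M ≤ (Sel F T).map ι ⊔ Sq Lˣ := by
    intro α hα
    obtain ⟨a, β, rfl⟩ := h.nm_sq h2 α hα.1
    refine mul_mem ?_ (Subgroup.mem_sup_right (mem_Sq.2 ⟨β, rfl⟩))
    have haS : ι a ∈ Sel L ∅ := by
      have := (Subgroup.mem_inf.1 hα).2
      rwa [Subgroup.mul_mem_cancel_right _ (Sq_le_Sel _ _ (mem_Sq.2 ⟨β, rfl⟩))] at this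
    by_cases hc : ∃ v : HeightOneSpectrum (𝓞 F), r ∈ v.asIdeal ∧ ¬ IsSquare (v.valuation F (a : F))
    · obtain ⟨v0, hv0, hv0'⟩ := hc
      have har : a * Units.mk0 (r : F) h0 ∈ Sel F T := by
        intro v hv
        rw [Units.val_mul, Units.val_mk0, map_mul]
        by_cases hrv : r ∈ v.asIdeal
        · have : v = v0 := by
            apply HeightOneSpectrum.ext
            rw [asIdeal_eq_span hr v hrv, asIdeal_eq_span hr v0 hv0]
          subst this
          exact isSquare_mul_of_not hv0' (not_isSquare_val hr v hrv)
        · rw [(HeightOneSpectrum.valuation_eq_one_iff_notMem (K := F) v).2 hrv, mul_one]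
          exact hram v hv hrv a haS
      have : ι a = ι (a * Units.mk0 (r : F) h0) * (ι (Units.mk0 (r : F) h0))⁻¹ := by
        rw [map_mul, mul_inv_cancel_right]
      change ι a ∈ _
      rw [this]
      exact mul_mem (Subgroup.mem_sup_left (Subgroup.mem_map_of_mem _ har))
        (Subgroup.mem_sup_right (inv_mem hιr))
    · push Not at hc
      refine Subgroup.mem_sup_left (Subgroup.mem_map_of_mem _ ?_)
      intro v hv
      by_cases hrv : r ∈ v.asIdeal
      · exact hc v hrv
      · exact hram v hv hrv a haS
  have e4 : (Sq Lˣ).relIndex ((Sel F T).map ι ⊔ Sq Lˣ) = ((Sq Lˣ).comap ι).relIndex (Sel F T) := by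
    rw [Subgroup.relIndex_sup_right, Subgroup.relIndex_comap]
  have e5 : Sq Fˣ ≤ (Sq Lˣ).comap ι := by
    intro x hx
    obtain ⟨y, rfl⟩ := mem_Sq.1 hx
    rw [Subgroup.mem_comap, mem_Sq]
    exact ⟨ι y, by simp⟩
  have e6 : ((Sq Lˣ).comap ι).relIndex (Sel F T) ≤ n2 :=
    (Subgroup.relIndex_le_of_le_left e5 hn2).trans hn2'
  have e7 : ((Sq Lˣ).comap ι).relIndex (Sel F T) ≠ 0 := fun h =>
    hn2 (Subgroup.relIndex_eq_zero_of_le_left e5 h)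
  rw [← e4] at e6 e7
  have e8 := (Subgroup.relIndex_le_of_le_right e3 e7).trans e6
  have e9 : (Sq Lˣ).relIndex M ≠ 0 := fun h => e7 (Subgroup.relIndex_eq_zero_of_le_right e3 h)
  rw [← e1, e2]
  exact ⟨mul_ne_zero e9 hn1, by rw [mul_comm]; exact Nat.mul_le_mul hn1' e8⟩
end layer
end PQ


namespace PQ
open IsDedekindDomain

theorem even_of_disc_aux {F L : Type*} [Field F] [NumberField F] [Field L] [NumberField L]
    [Algebra F L] {θ : L} {r : F} (h : Quad F L θ r) (z : L) (hzi : IsIntegral ℤ z) (s n : 𝓞 F)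
    (hz : z ^ 2 = algebraMap F L s * z - algebraMap F L n)
    (hzF : ∀ x : F, algebraMap F L x ≠ z)
    (v : HeightOneSpectrum (𝓞 F)) (hv : s ^ 2 - 4 * n ∉ v.asIdeal)
    (a : Fˣ) (ha : Units.map (algebraMap F L).toMonoidHom a ∈ Sel L ∅) :
    IsSquare (v.valuation F (a : F)) := by
  refine even_of_disc h (⟨z, hzi⟩ : 𝓞 L) s n ?_ hzF v hv a ha
  apply RingOfIntegers.ext
  exact hz

theorem no_sol {p : ℕ} (hp : p.Prime) (h3 : p % 4 = 3) {x y c : ℚ} (hc : c ≠ 0)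
    (h : x ^ 2 - p * y ^ 2 = - c ^ 2) : False := by
  obtain ⟨X, Y, C, hC, hXYC⟩ : ∃ X Y C : ℤ, C ≠ 0 ∧ X ^ 2 + C ^ 2 = p * Y ^ 2 := by
    refine ⟨x.num * y.den * c.den, y.num * x.den * c.den, c.num * x.den * y.den, ?_, ?_⟩
    · simp [hc]
    · have hx : (x.den : ℚ) ≠ 0 := by simp
      have hy : (y.den : ℚ) ≠ 0 := by simp
      have hcc : (c.den : ℚ) ≠ 0 := by simp
      have ex : (x.num : ℚ) = x * x.den := (Rat.mul_den_eq_num x).symm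
      have ey : (y.num : ℚ) = y * y.den := (Rat.mul_den_eq_num y).symm
      have ec : (c.num : ℚ) = c * c.den := (Rat.mul_den_eq_num c).symm
      have : ((x.num * y.den * c.den) ^ 2 + (c.num * x.den * y.den) ^ 2 : ℚ) =
         p * (y.num * x.den * c.den : ℚ) ^ 2 := by
        rw [ex, ey, ec]
        linear_combination (x.den * y.den * c.den : ℚ) ^ 2 * h
      exact_mod_cast this
  have hN : p * Y.natAbs ^ 2 = X.natAbs ^ 2 + C.natAbs ^ 2 := by
    zify; simp [hXYC]
  have hC' : C.natAbs ≠ 0 := by simpa using hC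
  have hY : Y.natAbs ≠ 0 := by
    intro h0
    rw [h0] at hN
    have : 0 < C.natAbs ^ 2 := by positivity
    simp at hN
    omega
  haveI := Fact.mk hp
  have := Nat.eq_sq_add_sq_iff.1 ⟨_, _, hN⟩ (q := p) (by
    rw [Nat.mem_primeFactors]
    exact ⟨hp, dvd_mul_right _ _, mul_ne_zero hp.ne_zero (pow_ne_zero _ hY)⟩) h3
  rw [padicValNat.mul hp.ne_zero (pow_ne_zero _ hY), padicValNat.pow, padicValNat_self] at this
  rcases this with ⟨k, hk⟩
  omega

theorem rat_sel {b : ℚˣ} (hb : b ∈ Sel ℚ ∅) : b * (-1) ∈ Sq ℚˣ ∨ b ∈ Sq ℚˣ := by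
  obtain ⟨n, c, hn0, hn⟩ := exists_int_rep b
  have hbS : Units.mk0 (n : ℚ) (by simpa using hn0) ∈ Sel ℚ ∅ := by
    have : Units.mk0 (n : ℚ) (by simpa using hn0) = b * c ^ 2 := by ext; simpa using hn
    rw [this]
    exact mul_mem hb (Sq_le_Sel _ _ (mem_Sq.2 ⟨c, rfl⟩))
  obtain ⟨I, hI⟩ := (sel_ideal hn0).1 (fun v => hbS v (by simp))
  haveI : IsPrincipalIdealRing (𝓞 ℚ) :=
    IsPrincipalIdealRing.of_surjective Rat.ringOfIntegersEquiv.symm.toRingHom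
      Rat.ringOfIntegersEquiv.symm.surjective
  obtain ⟨g, rfl⟩ := (IsPrincipalIdealRing.principal I).principal
  rw [Ideal.submodule_span_eq, Ideal.span_singleton_pow, Ideal.span_singleton_eq_span_singleton] at hI
  obtain ⟨u, hu⟩ := hI
  have hu' : (u : 𝓞 ℚ) = 1 ∨ (u : 𝓞 ℚ) = -1 := by
    have h1 : IsUnit (Rat.ringOfIntegersEquiv (u : 𝓞 ℚ)) := u.isUnit.map _
    rcases Int.isUnit_iff.1 h1 with h | h
    · left; apply Rat.ringOfIntegersEquiv.injective; simp [h]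
    · right; apply Rat.ringOfIntegersEquiv.injective; simp [h]
  have hg0 : (g : ℚ) ≠ 0 := by
    intro h0
    have : g = 0 := by simpa using h0
    rw [this] at hu
    simp at hu
    exact hn0 hu
  have hcne : (c : ℚ) ≠ 0 := c.ne_zero
  rcases hu' with h | h
  · right
    rw [h, mul_one] at hu
    rw [mem_Sq]
    refine ⟨Units.mk0 _ hg0 * c⁻¹, ?_⟩
    ext
    have := congrArg (algebraMap (𝓞 ℚ) ℚ) hu
    simp only [map_pow, hn] at this
    simp
    field_simp
    linear_combination -this
  · left
    rw [h] at hu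
    rw [mem_Sq]
    refine ⟨Units.mk0 _ hg0 * c⁻¹, ?_⟩
    ext
    have := congrArg (algebraMap (𝓞 ℚ) ℚ) hu
    simp only [map_pow, map_mul, map_neg, map_one, hn] at this
    simp
    field_simp
    linear_combination -this

theorem relIndex_T {F : Type*} [Field F] [NumberField F] {T : Set (HeightOneSpectrum (𝓞 F))}
    (hT : T.Subsingleton) {n : ℕ} (h0 : (Sq Fˣ).relIndex (Sel F ∅) ≠ 0)
    (hn : (Sq Fˣ).relIndex (Sel F ∅) ≤ n) :
    (Sq Fˣ).relIndex (Sel F T) ≠ 0 ∧ (Sq Fˣ).relIndex (Sel F T) ≤ n * 2 := by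
  have h2 := sel_T hT
  rw [← Subgroup.relIndex_mul_relIndex _ _ _ (Sq_le_Sel F ∅) sel_mono]
  exact ⟨mul_ne_zero h0 (ne_zero_of_dvd_ne_zero two_ne_zero h2),
    Nat.mul_le_mul hn (Nat.le_of_dvd two_pos h2)⟩

theorem rat_relIndex : (Sq ℚˣ).relIndex (Sel ℚ ∅) ∣ 2 := by
  rw [Subgroup.relIndex_dvd_two_iff]
  refine ⟨-1, ?_, fun b hb => rat_sel hb⟩
  intro v _
  simp

theorem absNorm_rat (n : ℕ) : Ideal.absNorm (Ideal.span {(n : 𝓞 ℚ)}) = n := by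
  rw [Ideal.absNorm_span_natCast, RingOfIntegers.rank]
  simp

theorem layer1 {k : Type*} [Field k] [NumberField k] {s : k} {p : ℕ} (hp : p.Prime)
    (h : Quad ℚ k s (p : ℚ)) :
    (Sq kˣ).relIndex (Sel k ∅) ≠ 0 ∧ (Sq kˣ).relIndex (Sel k ∅) ≤ 4 := by
  have hr : (Ideal.absNorm (Ideal.span {((p : ℕ) : 𝓞 ℚ)})).Prime := by rw [absNorm_rat]; exact hp
  have h' : Quad ℚ k s (((p : ℕ) : 𝓞 ℚ) : ℚ) := by simpa using h
  have hs2 : s ^ 2 = (p : k) := by simpa using h.sq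
  have hsF : ∀ x : ℚ, algebraMap ℚ k x ≠ s := by
    intro x hx
    have := h.indep (x := x) (y := -1) (by rw [hx]; simp)
    simp at this
  have hsint : IsIntegral ℤ s := ⟨X ^ 2 - C (p : ℤ), by monicity!, by simp [hs2]⟩
  -- generic unramifiedness
  have gen : ∀ v : HeightOneSpectrum (𝓞 ℚ), ((2 : ℕ) : 𝓞 ℚ) ∉ v.asIdeal → ((p : ℕ) : 𝓞 ℚ) ∉ v.asIdeal →
      ∀ a : ℚˣ, Units.map (algebraMap ℚ k).toMonoidHom a ∈ Sel k ∅ →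
        IsSquare (v.valuation ℚ (a : ℚ)) := by
    intro v h2 hpv a ha
    refine even_of_disc_aux h' s hsint 0 (-(p : 𝓞 ℚ)) ?_ hsF v ?_ a ha
    · simp [hs2]
    · intro hm
      have : (0 : 𝓞 ℚ) ^ 2 - 4 * -(p : 𝓞 ℚ) = (((2 : ℕ) : 𝓞 ℚ) * ((2 : ℕ) : 𝓞 ℚ)) * p := by
        push_cast; ring
      rw [this] at hm
      rcases v.isPrime.mem_or_mem hm with h1 | h1
      · rcases v.isPrime.mem_or_mem h1 with h1 | h1 <;> exact h2 h1
      · exact hpv h1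
  have hq0 : (Sq ℚˣ).relIndex (Sel ℚ ∅) ≠ 0 := ne_zero_of_dvd_ne_zero two_ne_zero rat_relIndex
  have hq2 : (Sq ℚˣ).relIndex (Sel ℚ ∅) ≤ 2 := Nat.le_of_dvd two_pos rat_relIndex
  have hmap : (Sel k ∅).map (Units.map (Algebra.norm ℚ)) ≤ Sel ℚ ∅ := by
    rintro _ ⟨α, hα, rfl⟩
    exact nm_mem α hα
  by_cases h3 : p % 4 = 3
  · have hT : ({v | ((2 : ℕ) : 𝓞 ℚ) ∈ v.asIdeal} : Set (HeightOneSpectrum (𝓞 ℚ))).Subsingleton := by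
      intro v hv w hw
      have h2 : (Ideal.absNorm (Ideal.span {((2 : ℕ) : 𝓞 ℚ)})).Prime := by
        rw [absNorm_rat]; exact Nat.prime_two
      apply HeightOneSpectrum.ext
      rw [asIdeal_eq_span h2 v hv, asIdeal_eq_span h2 w hw]
    obtain ⟨hT0, hT2⟩ := relIndex_T hT hq0 hq2
    have hone : (Sq ℚˣ).relIndex ((Sel k ∅).map (Units.map (Algebra.norm ℚ))) = 1 := by
      rw [Subgroup.relIndex_eq_one]
      rintro _ ⟨α, hα, rfl⟩
      rcases rat_sel (nm_mem (F := ℚ) α hα) with h1 | h1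
      · exfalso
        obtain ⟨c, hc⟩ := mem_Sq.1 h1
        obtain ⟨x, y, hxy⟩ := h.gen α
        have := congrArg Units.val hc
        simp only [Units.val_pow_eq_pow_val, Units.val_mul, Units.coe_map, hxy] at this
        rw [h.norm] at this
        refine no_sol hp h3 (x := x) (y := y) (c := c) c.ne_zero ?_
        rw [this]
        simp
      · exact h1
    have := layer h' hr _ (fun v hv => gen v hv) 1 (2 * 2) (by rw [hone]; simp) hone.le hT0 hT2
    simpa using this
  · have hram : ∀ v : HeightOneSpectrum (𝓞 ℚ), ((p : ℕ) : 𝓞 ℚ) ∉ v.asIdeal →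
      ∀ a : ℚˣ, Units.map (algebraMap ℚ k).toMonoidHom a ∈ Sel k ∅ →
        IsSquare (v.valuation ℚ (a : ℚ)) := by
      rcases hp.eq_two_or_odd with rfl | hodd
      · exact fun v hv => gen v hv hv
      · intro v hv a ha
        obtain ⟨m, hm⟩ : ∃ m, p = 4 * m + 1 := ⟨p / 4, by omega⟩
        have hpk : (p : k) = 4 * m + 1 := by rw [hm]; push_cast; ring
        have hω2 : ((1 + s) / 2) ^ 2 - (1 + s) / 2 = (m : k) := by
          field_simp
          linear_combination hs2 + hpk
        have hωint : IsIntegral ℤ ((1 + s) / 2) := by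
          refine ⟨X ^ 2 - X - C (m : ℤ), by monicity!, ?_⟩
          simp [hω2]
        refine even_of_disc_aux h' ((1 + s) / 2) hωint 1 (-(m : 𝓞 ℚ)) ?_ ?_ v ?_ a ha
        · simp only [map_neg, map_one, map_natCast]
          linear_combination hω2
        · intro x hx
          apply hsF (2 * x - 1)
          simp only [map_sub, map_mul, hx, map_one, map_ofNat]
          field_simp
          ring
        · convert hv using 2
          rw [hm]; push_cast; ring
    have := layer h' hr ∅ (fun v _ => hram v) 2 2
      (fun h0 => hq0 (Subgroup.relIndex_eq_zero_of_le_right hmap h0))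
      ((Subgroup.relIndex_le_of_le_right hmap hq0).trans hq2) hq0 hq2
    simpa using this
end PQ


namespace PQ
open IsDedekindDomain

section
variable {k : Type*} [Field k] [NumberField k]

theorem rext {a b : 𝓞 k} (h : algebraMap (𝓞 k) k a = algebraMap (𝓞 k) k b) : a = b :=
  FaithfulSMul.algebraMap_injective (𝓞 k) k h

theorem rtwo : algebraMap (𝓞 k) k 2 = 2 := _root_.map_ofNat (algebraMap (𝓞 k) k) 2

theorem two_split (hdim : Module.finrank ℚ k = 2) {v w : HeightOneSpectrum (𝓞 k)} (hvw : v ≠ w)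
    (hv : (2 : 𝓞 k) ∈ v.asIdeal) (hw : (2 : 𝓞 k) ∈ w.asIdeal) :
    (∀ x ∈ v.asIdeal, x ∈ w.asIdeal → ∃ t, x = 2 * t) ∧ Ideal.absNorm v.asIdeal = 2 := by
  have hne : v.asIdeal ≠ w.asIdeal := fun h => hvw (HeightOneSpectrum.ext h)
  have hco : v.asIdeal ⊔ w.asIdeal = ⊤ :=
    Ideal.IsMaximal.coprime_of_ne v.isMaximal w.isMaximal hne
  have hinf := Ideal.mul_eq_inf_of_coprime hco
  have hdvd : v.asIdeal * w.asIdeal ∣ Ideal.span {(2 : 𝓞 k)} := by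
    rw [Ideal.dvd_span_singleton, hinf]
    exact ⟨hv, hw⟩
  obtain ⟨J, hJ⟩ := hdvd
  have h4 : Ideal.absNorm (Ideal.span {(2 : 𝓞 k)}) = 4 := by
    have := Ideal.absNorm_span_natCast (S := 𝓞 k) 2
    rw [RingOfIntegers.rank, hdim] at this
    simpa using this
  have hnv : Ideal.absNorm v.asIdeal ≠ 1 := by
    rw [Ne, Ideal.absNorm_eq_one_iff]; exact v.isPrime.ne_top
  have hnw : Ideal.absNorm w.asIdeal ≠ 1 := by
    rw [Ne, Ideal.absNorm_eq_one_iff]; exact w.isPrime.ne_top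
  rw [hJ, map_mul, map_mul] at h4
  have hall : Ideal.absNorm v.asIdeal = 2 ∧ Ideal.absNorm J = 1 := by
    generalize Ideal.absNorm v.asIdeal = a at *
    generalize Ideal.absNorm w.asIdeal = b at *
    generalize Ideal.absNorm J = c at *
    have ha : a ∣ 4 := ⟨b * c, by rw [← h4]; ring⟩
    have hb : b ∣ 4 := ⟨a * c, by rw [← h4]; ring⟩
    have ha' := Nat.le_of_dvd (by norm_num) ha
    have hb' := Nat.le_of_dvd (by norm_num) hb
    interval_cases a <;> interval_cases b <;> omega
  refine ⟨fun x hx hx' => ?_, hall.1⟩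
  rw [Ideal.absNorm_eq_one_iff] at hall
  rw [hall.2, Ideal.mul_top, hinf] at hJ
  have : x ∈ Ideal.span {(2 : 𝓞 k)} := by rw [hJ]; exact ⟨hx, hx'⟩
  exact Ideal.mem_span_singleton'.1 this |>.imp fun t ht => by rw [← ht, mul_comm]

theorem sq_sub_self_mem {v : HeightOneSpectrum (𝓞 k)} (hv : Ideal.absNorm v.asIdeal = 2)
    (x : 𝓞 k) : x ^ 2 - x ∈ v.asIdeal := by
  haveI := v.isMaximal
  letI := Ideal.Quotient.field v.asIdeal
  have hc : Nat.card (𝓞 k ⧸ v.asIdeal) = 2 := hv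
  haveI : Finite (𝓞 k ⧸ v.asIdeal) := Nat.finite_of_card_ne_zero (by rw [hc]; norm_num)
  letI := Fintype.ofFinite (𝓞 k ⧸ v.asIdeal)
  have := FiniteField.pow_card (Ideal.Quotient.mk v.asIdeal x)
  rw [← Nat.card_eq_fintype_card, hc] at this
  rw [← Ideal.Quotient.eq, map_pow, this]

theorem one_not_mem (v : HeightOneSpectrum (𝓞 k)) : (1 : 𝓞 k) ∉ v.asIdeal :=
  fun h => v.isPrime.ne_top ((Ideal.eq_top_iff_one _).2 h)

theorem norm_int_two (hdim : Module.finrank ℚ k = 2) (t : 𝓞 k) :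
    Algebra.norm ℤ (2 * t) = 4 * Algebra.norm ℤ t := by
  have h2 : Algebra.norm ℤ (2 : 𝓞 k) = 4 := by
    have := Algebra.norm_algebraMap (R := ℚ) (S := k) 2
    rw [hdim] at this
    have h' := Algebra.coe_norm_int (K := k) (2 : 𝓞 k)
    have e : ((2 : 𝓞 k) : k) = algebraMap ℚ k 2 := rtwo.trans (_root_.map_ofNat (algebraMap ℚ k) 2).symm
    rw [e, this] at h'
    have h4 : ((2 : ℚ) ^ 2) = ((4 : ℤ) : ℚ) := by norm_num
    rw [h4] at h'
    exact_mod_cast h'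
  rw [map_mul, h2]

variable {s : k} {p : ℕ}

theorem sub_three (h : Quad ℚ k s (p : ℚ)) (hp3 : p % 4 = 3) :
    ({v | (2 : 𝓞 k) ∈ v.asIdeal} : Set (HeightOneSpectrum (𝓞 k))).Subsingleton := by
  intro v hv w hw
  by_contra hne
  have hdim := h.finrank
  have hs2 : s ^ 2 = (p : k) := by simpa using h.sq
  have hsint : IsIntegral ℤ s := ⟨X ^ 2 - C (p : ℤ), by monicity!, by simp [hs2]⟩
  let r : 𝓞 k := ⟨s, hsint⟩
  have hr2 : r ^ 2 = (p : 𝓞 k) := by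
    apply rext
    rw [map_pow, map_natCast]
    exact hs2
  obtain ⟨H, -⟩ := two_split hdim hne hv hw
  have hmem : ∀ u : HeightOneSpectrum (𝓞 k), (2 : 𝓞 k) ∈ u.asIdeal → r + 1 ∈ u.asIdeal := by
    intro u hu
    apply u.isPrime.mem_of_pow_mem 2
    have : (r + 1) ^ 2 = 2 * (r + (2 * (p / 4 : ℕ) + 2 : ℕ)) := by
      have hpe : (p : 𝓞 k) = ((4 * (p / 4) + 3 : ℕ) : 𝓞 k) := by congr 1; omega
      push_cast at hpe ⊢
      linear_combination hr2 + hpe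
    rw [this]
    exact Ideal.mul_mem_right _ _ hu
  obtain ⟨t, ht⟩ := H _ (hmem v hv) (hmem w hw)
  have hN := norm_int_two hdim t
  rw [← ht] at hN
  have h1 := Algebra.coe_norm_int (K := k) (r + 1)
  have e : ((r + 1 : 𝓞 k) : k) = algebraMap ℚ k 1 + algebraMap ℚ k 1 * s := by
    change s + 1 = _
    simp [add_comm]
  rw [e, h.norm, hN] at h1
  have h2 : 4 * Algebra.norm ℤ t = 1 - p := by
    have h3 : ((4 * Algebra.norm ℤ t : ℤ) : ℚ) = ((1 - p : ℤ) : ℚ) := by rw [h1]; simp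
    exact_mod_cast h3
  omega

theorem sub_five (h : Quad ℚ k s (p : ℚ)) (hp5 : p % 8 = 5) :
    ({v | (2 : 𝓞 k) ∈ v.asIdeal} : Set (HeightOneSpectrum (𝓞 k))).Subsingleton := by
  intro v hv w hw
  by_contra hne
  have hdim := h.finrank
  have hs2 : s ^ 2 = (p : k) := by simpa using h.sq
  obtain ⟨m, hm⟩ : ∃ m, p = 8 * m + 5 := ⟨p / 8, by omega⟩
  have hpk : (p : k) = 8 * m + 5 := by rw [hm]; push_cast; ring
  have hω2 : ((1 + s) / 2) ^ 2 - (1 + s) / 2 = ((2 * m + 1 : ℕ) : k) := by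
    push_cast
    field_simp
    linear_combination hs2 + hpk
  have hωint : IsIntegral ℤ ((1 + s) / 2) := by
    refine ⟨X ^ 2 - X - C ((2 * m + 1 : ℕ) : ℤ), by monicity!, ?_⟩
    simp [hω2]
  let ω : 𝓞 k := ⟨(1 + s) / 2, hωint⟩
  have hω : ω ^ 2 - ω = 2 * m + 1 := by
    apply rext
    rw [map_sub, map_pow]
    refine hω2.trans ?_
    simp [rtwo]
  obtain ⟨-, H⟩ := two_split hdim hne hv hw
  have := sq_sub_self_mem H ω
  rw [hω] at this
  apply one_not_mem v
  simpa using v.asIdeal.sub_mem this (v.asIdeal.mul_mem_right (m : 𝓞 k) hv)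

theorem sub_one (h : Quad ℚ k s (p : ℚ)) (ω : 𝓞 k) (hω : (ω : k) = (1 + s) / 2) :
    ({v | (2 : 𝓞 k) ∈ v.asIdeal ∧ ω ∈ v.asIdeal} : Set (HeightOneSpectrum (𝓞 k))).Subsingleton := by
  intro v hv w hw
  by_contra hne
  have hdim := h.finrank
  obtain ⟨H, -⟩ := two_split hdim hne hv.1 hw.1
  obtain ⟨t, ht⟩ := H _ hv.2 hw.2
  have hN := norm_int_two hdim t
  have hN' := norm_int_two hdim (t + 1)
  have ht' : 2 * (t + 1) = ω + 2 := by rw [ht]; ring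
  rw [← ht] at hN
  rw [ht'] at hN'
  have h1 := Algebra.coe_norm_int (K := k) ω
  have h1' := Algebra.coe_norm_int (K := k) (ω + 2)
  have e : (ω : k) = algebraMap ℚ k (1 / 2) + algebraMap ℚ k (1 / 2) * s := by
    rw [hω]; simp; ring
  have e' : ((ω + 2 : 𝓞 k) : k) = algebraMap ℚ k (5 / 2) + algebraMap ℚ k (1 / 2) * s := by
    have e0 : ((ω + 2 : 𝓞 k) : k) = (ω : k) + 2 := (map_add (algebraMap (𝓞 k) k) ω 2).trans (by rw [rtwo])
    rw [e0, hω]; simp; ring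
  rw [e, h.norm, hN] at h1
  rw [e', h.norm, hN'] at h1'
  have h2 : 4 * Algebra.norm ℤ (t + 1) - 4 * Algebra.norm ℤ t = 6 := by
    have h3 : ((4 * Algebra.norm ℤ (t + 1) - 4 * Algebra.norm ℤ t : ℤ) : ℚ) = ((6 : ℤ) : ℚ) := by
      push_cast at h1 h1' ⊢
      rw [h1, h1']; ring
    exact_mod_cast h3
  omega

theorem absNorm_root (h : Quad ℚ k s (p : ℚ)) (r : 𝓞 k) (hr : (r : k) = s) :
    Ideal.absNorm (Ideal.span {r}) = p := by
  rw [Ideal.absNorm_span_singleton]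
  have h1 := Algebra.coe_norm_int (K := k) r
  have e : (r : k) = algebraMap ℚ k 0 + algebraMap ℚ k 1 * s := by rw [hr]; simp
  rw [e, h.norm] at h1
  have h2 : Algebra.norm ℤ r = -p := by
    have h3 : ((Algebra.norm ℤ r : ℤ) : ℚ) = ((-p : ℤ) : ℚ) := by rw [h1]; simp
    exact_mod_cast h3
  rw [h2]; simp

theorem layer2 {K : Type*} [Field K] [NumberField K] [Algebra k K] {θ : K} (hp : p.Prime)
    (h : Quad ℚ k s (p : ℚ)) (hK : Quad k K θ s) (φ : k →+* ℝ) (hφ : φ s < 0) :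
    (Sq Kˣ).relIndex (Sel K ∅) ≠ 0 ∧ (Sq Kˣ).relIndex (Sel K ∅) ≤ 16 := by
  have hs2 : s ^ 2 = (p : k) := by simpa using h.sq
  have hsint : IsIntegral ℤ s := ⟨X ^ 2 - C (p : ℤ), by monicity!, by simp [hs2]⟩
  obtain ⟨r, hr⟩ : ∃ r : 𝓞 k, (r : k) = s := ⟨⟨s, hsint⟩, rfl⟩
  have hrN : (Ideal.absNorm (Ideal.span {r})).Prime := by rw [absNorm_root h r hr]; exact hp
  obtain ⟨hk0, hk4⟩ := layer1 hp h
  have hK' : Quad k K θ (r : k) := by rw [hr]; exact hK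
  have hθF : ∀ x : k, algebraMap k K x ≠ θ := by
    intro x hx
    have := hK.indep (x := x) (y := -1) (by rw [hx]; simp)
    simp at this
  have hθ4 : θ ^ 4 = (p : K) := by
    rw [show θ ^ 4 = (θ ^ 2) ^ 2 by ring, hK.sq, ← map_pow, hs2, map_natCast]
  have hθint : IsIntegral ℤ θ := ⟨X ^ 4 - C (p : ℤ), by monicity!, by simp [hθ4]⟩
  have gen : ∀ v : HeightOneSpectrum (𝓞 k), (2 : 𝓞 k) ∉ v.asIdeal → r ∉ v.asIdeal →
      ∀ a : kˣ, Units.map (algebraMap k K).toMonoidHom a ∈ Sel K ∅ →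
        IsSquare (v.valuation k (a : k)) := by
    intro v h2 hpv a ha
    refine even_of_disc_aux hK' θ hθint 0 (-r) ?_ hθF v ?_ a ha
    · simp [hK.sq, hr]
    · intro hm
      have : (0 : 𝓞 k) ^ 2 - 4 * -r = (2 * 2) * r := by ring
      rw [this] at hm
      rcases v.isPrime.mem_or_mem hm with h1 | h1
      · rcases v.isPrime.mem_or_mem h1 with h1 | h1 <;> exact h2 h1
      · exact hpv h1
  -- the set T
  obtain ⟨T, hTs, hTr⟩ : ∃ T : Set (HeightOneSpectrum (𝓞 k)), T.Subsingleton ∧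
      ∀ v ∉ T, r ∉ v.asIdeal → ∀ a : kˣ, Units.map (algebraMap k K).toMonoidHom a ∈ Sel K ∅ →
        IsSquare (v.valuation k (a : k)) := by
    rcases hp.eq_two_or_odd with h2 | hodd
    · refine ⟨{v | (2 : 𝓞 k) ∈ v.asIdeal}, ?_, fun v hv => gen v hv⟩
      have hr2 : r ^ 2 = (2 : 𝓞 k) := by
        apply rext
        have hr' : algebraMap (𝓞 k) k r = s := hr
        rw [map_pow, hr', hs2, h2, rtwo]; simp
      have hm : ∀ u : HeightOneSpectrum (𝓞 k), (2 : 𝓞 k) ∈ u.asIdeal → r ∈ u.asIdeal := by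
        intro u hu
        rw [← hr2] at hu
        exact u.isPrime.mem_of_pow_mem 2 hu
      intro v hv w hw
      apply HeightOneSpectrum.ext
      rw [asIdeal_eq_span hrN v (hm v hv), asIdeal_eq_span hrN w (hm w hw)]
    · by_cases h3 : p % 4 = 3
      · exact ⟨_, sub_three h h3, fun v hv => gen v hv⟩
      by_cases h5 : p % 8 = 5
      · exact ⟨_, sub_five h h5, fun v hv => gen v hv⟩
      obtain ⟨m, hm⟩ : ∃ m, p = 8 * m + 1 := ⟨p / 8, by omega⟩
      have hpk : (p : k) = 8 * m + 1 := by rw [hm]; push_cast; ring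
      have hω2 : ((1 + s) / 2) ^ 2 - (1 + s) / 2 = ((2 * m : ℕ) : k) := by
        push_cast
        field_simp
        linear_combination hs2 + hpk
      have hωint : IsIntegral ℤ ((1 + s) / 2) := by
        refine ⟨X ^ 2 - X - C ((2 * m : ℕ) : ℤ), by monicity!, ?_⟩
        simp [hω2]
      obtain ⟨ω, hω⟩ : ∃ ω : 𝓞 k, (ω : k) = (1 + s) / 2 := ⟨⟨_, hωint⟩, rfl⟩
      have hω' : algebraMap (𝓞 k) k ω = (1 + s) / 2 := hω
      have hr' : algebraMap (𝓞 k) k r = s := hr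
      refine ⟨_, sub_one h ω hω, ?_⟩
      intro v hv hrv a ha
      by_cases hv2 : (2 : 𝓞 k) ∈ v.asIdeal
      swap
      · exact gen v hv2 hrv a ha
      have hωv : ω ∉ v.asIdeal := fun hh => hv ⟨hv2, hh⟩
      have hω0 : (1 + s) / 2 ≠ 0 := by
        rw [← hω]
        intro h0
        have : ω = 0 := by simpa using h0
        rw [this] at hωv
        exact hωv v.asIdeal.zero_mem
      have hωK0 : algebraMap k K ((1 + s) / 2) ≠ 0 := (_root_.map_ne_zero _).2 hω0
      have hz : (algebraMap k K ((1 + s) / 2) * ((θ - 1) / 2)) ^ 2 =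
          algebraMap k K (algebraMap (𝓞 k) k (-ω)) * (algebraMap k K ((1 + s) / 2) * ((θ - 1) / 2)) -
          algebraMap k K (algebraMap (𝓞 k) k (-(ω * m))) := by
        simp only [map_neg, map_mul, map_natCast, hω', map_div₀, map_add, map_one, map_ofNat]
        have e1 := hK.sq
        have e2 : (algebraMap k K s) ^ 2 = 8 * m + 1 := by rw [← map_pow, hs2, hpk]; simp [_root_.map_ofNat (algebraMap k K) 8]
        generalize algebraMap k K s = σ at *
        have e3 : θ ^ 2 = σ := e1
        field_simp
        have : (1 + σ) ^ 2 * (θ - 1) ^ 2 + 2 * (1 + σ) ^ 2 * (θ - 1) = 8 * m * (1 + σ) := by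
          linear_combination (1 + σ) ^ 2 * e3 + (1 + σ) * e2
        linear_combination this
      have hzint : IsIntegral ℤ (algebraMap k K ((1 + s) / 2) * ((θ - 1) / 2)) := by
        have : IsIntegral (𝓞 k) (algebraMap k K ((1 + s) / 2) * ((θ - 1) / 2)) := by
          refine ⟨X ^ 2 - C (-ω) * X + C (-(ω * m)), by monicity!, ?_⟩
          simp only [eval₂_add, eval₂_sub, eval₂_mul, eval₂_pow, eval₂_X, eval₂_C]
          rw [hz]
          rw [IsScalarTower.algebraMap_apply (𝓞 k) k K, IsScalarTower.algebraMap_apply (𝓞 k) k K]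
          ring
        exact isIntegral_trans _ this
      refine even_of_disc_aux hK' _ hzint (-ω) (-(ω * m)) hz ?_ v ?_ a ha
      · intro x hx
        apply hθF (2 * (x / ((1 + s) / 2)) + 1)
        rw [map_add, map_mul, map_div₀, hx, map_one, map_ofNat]
        field_simp
        ring
      · have : (-ω) ^ 2 - 4 * -(ω * m) = ω ^ 2 * r := by
          apply rext
          simp only [map_sub, map_mul, map_neg, map_pow, map_natCast, map_ofNat, hω', hr']
          field_simp
          linear_combination (-1 - s) * (hs2 + hpk)
        rw [this]
        intro hm
        rcases v.isPrime.mem_or_mem hm with h1 | h1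
        · exact hωv (v.isPrime.mem_of_pow_mem 2 h1)
        · exact hrv h1
  obtain ⟨hT0, hT8⟩ := relIndex_T hTs hk0 hk4
  -- norms
  set M := (Sel K ∅).map (Units.map (Algebra.norm k)) with hM
  have hMS : M ≤ Sel k ∅ := by
    rintro _ ⟨α, hα, rfl⟩
    exact nm_mem α hα
  let W := Sq kˣ ⊔ M
  have hWS : W ≤ Sel k ∅ := sup_le (Sq_le_Sel _ _) hMS
  have hpos : ∀ a ∈ W, 0 < φ (a : k) := by
    let Ppos : Subgroup kˣ :=
      { carrier := {a | 0 < φ (a : k)}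
        mul_mem' := fun {a b} ha hb => by
          simp only [Set.mem_ofPred_eq, Units.val_mul, map_mul] at *
          positivity
        one_mem' := by simp
        inv_mem' := fun {a} ha => by
          simp only [Set.mem_ofPred_eq, Units.val_inv_eq_inv_val, map_inv₀] at *
          positivity }
    have : W ≤ Ppos := by
      refine sup_le ?_ ?_
      · intro a ha
        obtain ⟨b, rfl⟩ := mem_Sq.1 ha
        change 0 < φ _
        have : φ (b : k) ≠ 0 := by simp
        simp only [Units.val_pow_eq_pow_val, map_pow]
        positivity
      · rintro _ ⟨α, hα, rfl⟩
        change 0 < φ _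
        obtain ⟨x, y, hxy⟩ := hK.gen α
        have h1 : φ (Algebra.norm k (α : K)) ≠ 0 := by simp
        have h2 : 0 ≤ φ (Algebra.norm k (α : K)) := by
          rw [hxy, hK.norm]
          simp only [map_sub, map_mul, map_pow]
          nlinarith [sq_nonneg (φ x), sq_nonneg (φ y)]
        exact lt_of_le_of_ne h2 (Ne.symm h1)
    exact this
  have hmul := Subgroup.relIndex_mul_relIndex (Sq kˣ) W (Sel k ∅) le_sup_left hWS
  have hW1 : W.relIndex (Sel k ∅) ≠ 1 := by
    rw [Ne, Subgroup.relIndex_eq_one]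
    intro hle
    have : (-1 : kˣ) ∈ W := hle (fun v _ => by simp)
    have := hpos _ this
    simp at this
    linarith
  have hSW : (Sq kˣ).relIndex W ≠ 0 ∧ (Sq kˣ).relIndex W ≤ 2 := by
    constructor
    · intro h0; rw [h0] at hmul; simp at hmul; exact hk0 hmul.symm
    · have : W.relIndex (Sel k ∅) ≠ 0 := by
        intro h0; rw [h0] at hmul; simp at hmul; exact hk0 hmul.symm
      have h2 : 2 ≤ W.relIndex (Sel k ∅) := by omega
      nlinarith
  have hMW : M ≤ W := le_sup_right
  have := layer hK' hrN T hTr 2 8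
    (fun h0 => hSW.1 (Subgroup.relIndex_eq_zero_of_le_right hMW h0))
    ((Subgroup.relIndex_le_of_le_right hMW hSW.1).trans hSW.2) hT0 hT8
  simpa using this
end
end PQ


namespace PQ
open IsDedekindDomain

section
variable {K : Type*} [Field K] [NumberField K]

/-- representatives for units modulo squares -/
noncomputable def urep (K : Type*) [Field K] [NumberField K]
    (x : Bool × (Fin (Units.rank K) → Bool)) : (𝓞 K)ˣ :=
  (if x.1 then -1 else 1) * ∏ i, Units.fundSystem K i ^ (if x.2 i then 1 else 0 : ℤ)

theorem sgn_mem (b : Bool) : (if b then -1 else 1 : (𝓞 K)ˣ) ∈ Units.torsion K := by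
  change _ ∈ CommGroup.torsion _
  rw [CommGroup.mem_torsion, isOfFinOrder_iff_pow_eq_one]
  exact ⟨2, by norm_num, by cases b <;> simp⟩

theorem urep_inj (hi : ∀ x : K, x ^ 2 ≠ -1) {x y : Bool × (Fin (Units.rank K) → Bool)}
    {w : (𝓞 K)ˣ} (h : urep K x = urep K y * w ^ 2) : x = y := by
  obtain ⟨⟨ζ, n⟩, hw, -⟩ := Units.exist_unique_eq_mul_prod K w
  obtain ⟨Z, -, hZ⟩ := Units.exist_unique_eq_mul_prod K (urep K x)
  have h1 := hZ (⟨_, sgn_mem x.1⟩, fun i => if x.2 i then 1 else 0) rfl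
  have h2 := hZ (⟨_, sgn_mem y.1⟩ * ζ ^ 2, fun i => (if y.2 i then 1 else 0) + 2 * n i) (by
    rw [h, hw, urep]
    simp only [Subgroup.coe_mul, Subgroup.coe_pow, zpow_add, Finset.prod_mul_distrib, mul_pow,
      ← Finset.prod_pow, mul_comm (2 : ℤ), zpow_mul]
    simp only [mul_assoc]
    congr 1
    rw [mul_left_comm]
    norm_cast)
  rw [← h2] at h1
  obtain ⟨ha, hb⟩ := Prod.mk.inj h1
  have e2 : x.2 = y.2 := by
    funext i
    have := congrFun hb i
    cases hx : x.2 i <;> cases hy : y.2 i <;> simp [hx, hy] at this ⊢ <;> omega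
  have e1 : x.1 = y.1 := by
    by_contra hne
    have h3 : ((ζ : (𝓞 K)ˣ)) ^ 2 = -1 := by
      have := congrArg Subtype.val ha
      simp only [Subgroup.coe_mul, Subgroup.coe_pow] at this
      cases hx : x.1 <;> cases hy : y.1 <;> simp [hx, hy] at this hne ⊢
      · rw [this, neg_neg]
      · exact this.symm
    apply hi (((ζ : (𝓞 K)ˣ) : 𝓞 K) : K)
    have h4 := congrArg (fun u : (𝓞 K)ˣ => algebraMap (𝓞 K) K (u : 𝓞 K)) h3
    simpa using h4
  exact Prod.ext e1 e2

theorem exists_sq_gen {R : Type*} [CommRing R] [IsDomain R] [IsDedekindDomain R] (c : ClassGroup R)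
    (hc : c ^ 2 = 1) : ∃ (I : nonZeroDivisors (Ideal R))
      (a : R), a ≠ 0 ∧ ClassGroup.mk0 I = c ∧ Ideal.span {a} = (I : Ideal R) ^ 2 := by
  obtain ⟨I, rfl⟩ := ClassGroup.mk0_surjective c
  rw [← map_pow] at hc
  have hp : Submodule.IsPrincipal ((I : Ideal R) ^ 2) :=
    (ClassGroup.mk0_eq_one_iff (pow_mem I.2 2)).1 hc
  obtain ⟨a, ha⟩ := hp.principal
  have ha' : Ideal.span {a} = (I : Ideal R) ^ 2 := ha.symm
  refine ⟨I, a, ?_, rfl, ha'⟩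
  rintro rfl
  apply nonZeroDivisors.ne_zero (pow_mem I.2 2)
  rw [← ha']; simp

set_option maxHeartbeats 1000000 in
theorem card_two_torsion (hi : ∀ x : K, x ^ 2 ≠ -1) (hrank : 2 ≤ Units.rank K)
    (h0 : (Sq Kˣ).relIndex (Sel K ∅) ≠ 0) (h16 : (Sq Kˣ).relIndex (Sel K ∅) ≤ 16) :
    Nat.card {c : ClassGroup (𝓞 K) // c ^ 2 = 1} ≤ 2 := by
  have hex : ∀ c : {c : ClassGroup (𝓞 K) // c ^ 2 = 1}, ∃ (I : nonZeroDivisors (Ideal (𝓞 K)))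
      (a : 𝓞 K), a ≠ 0 ∧ ClassGroup.mk0 I = c.1 ∧ Ideal.span {a} = (I : Ideal (𝓞 K)) ^ 2 := by
    exact fun c => exists_sq_gen c.1 c.2
  choose I a ha0 hIc hIa using hex
  let g : {c : ClassGroup (𝓞 K) // c ^ 2 = 1} × (Bool × (Fin (Units.rank K) → Bool)) → 𝓞 K :=
    fun x => a x.1 * urep K x.2
  have hg0 : ∀ x, (g x : K) ≠ 0 := by
    intro x
    have : g x ≠ 0 := mul_ne_zero (ha0 _) (urep K x.2).ne_zero
    simpa using this
  have hgI : ∀ x, Ideal.span {g x} = (I x.1 : Ideal (𝓞 K)) ^ 2 := by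
    intro x
    rw [← hIa, Ideal.span_singleton_eq_span_singleton]
    exact ⟨(urep K x.2)⁻¹, by simp [g, mul_assoc]⟩
  have hgS : ∀ x, Units.mk0 (g x : K) (hg0 x) ∈ Sel K ∅ := by
    intro x v _
    exact (sel_ideal (by simpa using hg0 x)).2 ⟨_, hgI x⟩ v
  let f : {c : ClassGroup (𝓞 K) // c ^ 2 = 1} × (Bool × (Fin (Units.rank K) → Bool)) →
      (Sel K ∅) ⧸ ((Sq Kˣ).subgroupOf (Sel K ∅)) := fun x =>
    QuotientGroup.mk ⟨Units.mk0 (g x : K) (hg0 x), hgS x⟩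
  have hf : Function.Injective f := by
    intro x y hxy
    have h1 := QuotientGroup.eq.1 hxy
    rw [Subgroup.mem_subgroupOf] at h1
    obtain ⟨β, hβ⟩ := mem_Sq.1 h1
    have hβ' : (g x : K) * (β : K) ^ 2 = g y := by
      have := congrArg (fun u : Kˣ => (g x : K) * (u : K)) hβ
      simpa [hg0 x] using this
    obtain ⟨X, Y, hY, hXY⟩ := IsFractionRing.div_surjective (A := 𝓞 K) (β : K)
    have hY0 : Y ≠ 0 := nonZeroDivisors.ne_zero hY
    have hYK : algebraMap (𝓞 K) K Y ≠ 0 := by simpa using hY0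
    have hX0 : X ≠ 0 := by
      rintro rfl
      simp at hXY
      exact β.ne_zero hXY.symm
    have hmain : g x * X ^ 2 = g y * Y ^ 2 := by
      apply rext
      rw [map_mul _ (g x), map_mul _ (g y), map_pow, map_pow]
      rw [← hXY] at hβ'
      change algebraMap (𝓞 K) K (g x) * _ = algebraMap (𝓞 K) K (g y) at hβ'
      rw [← hβ']
      field_simp
    have hid : Ideal.span {X} * (I x.1 : Ideal (𝓞 K)) = Ideal.span {Y} * (I y.1 : Ideal (𝓞 K)) := by
      apply pow_left_injective two_ne_zero
      change (_ : Ideal (𝓞 K)) ^ 2 = _ ^ 2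
      rw [mul_pow, mul_pow, ← hgI, ← hgI, Ideal.span_singleton_pow, Ideal.span_singleton_pow,
        Ideal.span_singleton_mul_span_singleton, Ideal.span_singleton_mul_span_singleton,
        mul_comm, hmain, mul_comm]
    have hc : x.1 = y.1 := by
      apply Subtype.ext
      rw [← hIc, ← hIc, ClassGroup.mk0_eq_mk0_iff]
      exact ⟨X, Y, hX0, hY0, hid⟩
    have hu : (urep K x.2 : 𝓞 K) * X ^ 2 = urep K y.2 * Y ^ 2 := by
      have h2 : a x.1 * ((urep K x.2 : 𝓞 K) * X ^ 2) = a x.1 * (urep K y.2 * Y ^ 2) := by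
        have := hmain
        simp only [g, ← hc] at this
        rw [← mul_assoc, ← mul_assoc, this]
      exact mul_left_cancel₀ (ha0 _) h2
    have hass : Ideal.span {X} = (Ideal.span {Y} : Ideal (𝓞 K)) := by
      rw [hc] at hid
      exact mul_right_cancel₀ (nonZeroDivisors.ne_zero (I y.1).2) hid
    obtain ⟨w, hw⟩ := Ideal.span_singleton_eq_span_singleton.1 hass
    have hfin : urep K x.2 = urep K y.2 * w ^ 2 := by
      apply Units.ext
      rw [← hw] at hu
      have h2 : X ^ 2 * (urep K x.2 : 𝓞 K) = X ^ 2 * (urep K y.2 * w ^ 2) := by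
        linear_combination hu
      simpa using mul_left_cancel₀ (pow_ne_zero 2 hX0) h2
    exact Prod.ext hc (urep_inj hi hfin)
  have hcard : Nat.card ((Sel K ∅) ⧸ ((Sq Kˣ).subgroupOf (Sel K ∅))) =
    (Sq Kˣ).relIndex (Sel K ∅) := rfl
  haveI : Finite ((Sel K ∅) ⧸ ((Sq Kˣ).subgroupOf (Sel K ∅))) :=
    Nat.finite_of_card_ne_zero (by rw [hcard]; exact h0)
  have hle := Nat.card_le_card_of_injective f hf
  rw [hcard, Nat.card_prod, Nat.card_prod, Nat.card_fun] at hle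
  simp only [Nat.card_eq_fintype_card (α := Bool), Fintype.card_bool,
    Nat.card_eq_fintype_card (α := Fin _), Fintype.card_fin] at hle
  have h4 : 2 ^ 2 ≤ 2 ^ Units.rank K := Nat.pow_le_pow_right two_pos hrank
  generalize 2 ^ Units.rank K = N at *
  generalize Nat.card {c : ClassGroup (𝓞 K) // c ^ 2 = 1} = M at *
  have := hle.trans h16
  by_contra hM
  have : 3 * (2 * 4) ≤ M * (2 * N) := Nat.mul_le_mul (by omega) (by omega)
  omega

theorem rank_ge (f1 f2 f3 : K →+* ℂ) (θ : K) (r : ℝ) (hr : 0 < r) (h1 : f1 θ = r) (h2 : f2 θ = -r)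
    (h3 : f3 θ = Complex.I * r) : 2 ≤ Units.rank K := by
  have hinj : Function.Injective
      (![InfinitePlace.mk f1, InfinitePlace.mk f2, InfinitePlace.mk f3]) := by
    have e1 : InfinitePlace.mk f1 (θ + 1) ^ 2 = (r + 1) ^ 2 := by
      rw [InfinitePlace.apply, map_add, h1, map_one, ← Complex.normSq_eq_norm_sq,
        Complex.normSq_apply]
      simp; ring
    have e2 : InfinitePlace.mk f2 (θ + 1) ^ 2 = (-r + 1) ^ 2 := by
      rw [InfinitePlace.apply, map_add, h2, map_one, ← Complex.normSq_eq_norm_sq,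
        Complex.normSq_apply]
      simp; ring
    have e3 : InfinitePlace.mk f3 (θ + 1) ^ 2 = r ^ 2 + 1 := by
      rw [InfinitePlace.apply, map_add, h3, map_one, ← Complex.normSq_eq_norm_sq,
        Complex.normSq_apply]
      simp; ring
    have n12 : InfinitePlace.mk f1 ≠ InfinitePlace.mk f2 := by
      intro h; rw [h, e2] at e1; nlinarith
    have n13 : InfinitePlace.mk f1 ≠ InfinitePlace.mk f3 := by
      intro h; rw [h, e3] at e1; nlinarith
    have n23 : InfinitePlace.mk f2 ≠ InfinitePlace.mk f3 := by
      intro h; rw [h, e3] at e2; nlinarith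
    intro i j hij
    generalize InfinitePlace.mk f1 = w1 at *
    generalize InfinitePlace.mk f2 = w2 at *
    generalize InfinitePlace.mk f3 = w3 at *
    fin_cases i <;> fin_cases j <;>
      simp [n12, n13, n23, n12.symm, n13.symm, n23.symm] at hij ⊢
  have := Fintype.card_le_of_injective _ hinj
  rw [Units.rank]
  simp at this
  omega

end

theorem cyclic_of_two {G : Type*} [CommGroup G] [Finite G]
    (h : Nat.card {c : G // c ^ 2 = 1} ≤ 2) (P : Sylow 2 G) : IsCyclic P := by
  classical
  have := Fintype.ofFinite P
  have hP : (Finset.univ.filter fun c : P => c ^ 2 = 1).card ≤ 2 := by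
    rw [← Fintype.card_subtype, ← Nat.card_eq_fintype_card]
    refine le_trans ?_ h
    refine Nat.card_le_card_of_injective
      (fun c : {c : P // c ^ 2 = 1} => (⟨c.1.1, by
        have := congrArg (Subtype.val) c.2
        simpa using this⟩ : {c : G // c ^ 2 = 1})) ?_
    intro a b hab
    apply Subtype.ext
    apply Subtype.ext
    simpa using hab
  have key : ∀ n : ℕ, (Finset.univ.filter fun a : P => a ^ (2 ^ n) = 1).card ≤ 2 ^ n := by
    intro n
    induction n with
    | zero =>
      rw [pow_zero, Finset.card_le_one]
      intro a ha b hb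
      simp at ha hb
      rw [ha, hb]
    | succ n ih =>
      have h1 := Finset.card_le_mul_card_image (f := fun a : P => a ^ 2)
        (Finset.univ.filter fun a : P => a ^ (2 ^ (n + 1)) = 1) 2 (by
          intro b hb
          obtain ⟨x0, -, rfl⟩ := Finset.mem_image.1 hb
          refine le_trans ?_ hP
          refine Finset.card_le_card_of_injOn (fun x => x * x0⁻¹) ?_ ?_
          · intro x hx
            have hx2 := (Finset.mem_filter.1 hx).2
            simp only [Finset.coe_filter, Finset.mem_univ, true_and, Set.mem_ofPred_eq]
            have hcomm : x * x0⁻¹ = x0⁻¹ * x := Subtype.ext (mul_comm _ _)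
            rw [Commute.mul_pow hcomm, hx2, inv_pow, mul_inv_cancel]
          · intro x _ y _ hxy
            exact mul_right_cancel hxy)
      refine h1.trans ?_
      rw [pow_succ, mul_comm]
      refine Nat.mul_le_mul_right 2 (le_trans (Finset.card_le_card ?_) ih)
      intro b hb
      obtain ⟨x0, hx0, rfl⟩ := Finset.mem_image.1 hb
      simp only [Finset.mem_filter, Finset.mem_univ, true_and] at hx0 ⊢
      rw [← pow_mul, ← hx0]
      congr 1
      ring
  apply isCyclic_of_card_pow_eq_one_le
  intro n hn
  obtain ⟨m, k, hk, rfl⟩ := Nat.exists_eq_two_pow_mul_odd hn.ne'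
  have : ∀ a : P, a ^ (2 ^ m * k) = 1 → a ^ (2 ^ m) = 1 := by
    intro a ha
    obtain ⟨j, hj⟩ := P.2 a
    have hord : orderOf a ∣ 2 ^ j := orderOf_dvd_of_pow_eq_one hj
    have hco : (orderOf a).Coprime k :=
      Nat.Coprime.coprime_dvd_left hord (Nat.Coprime.pow_left _ (Nat.coprime_two_left.2 hk))
    exact orderOf_dvd_iff_pow_eq_one.1 (hco.dvd_of_dvd_mul_right (orderOf_dvd_of_pow_eq_one ha))
  have h2 := key m
  refine (Finset.card_le_card ?_).trans (h2.trans (Nat.le_mul_of_pos_right _ hk.pos))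
  intro a ha
  simp only [Finset.mem_filter, Finset.mem_univ, true_and] at ha ⊢
  exact this a ha
end PQ


namespace PQ

theorem irr_two {p : ℕ} (hp : p.Prime) : Irreducible (X ^ 2 - C (p : ℚ)) := by
  apply X_pow_sub_C_irreducible_of_prime Nat.prime_two
  intro b hb
  have : IsSquare ((p : ℕ) : ℚ) := ⟨b, by rw [← hb]; ring⟩
  rw [Rat.isSquare_natCast_iff] at this
  exact hp.prime.irreducible.not_isSquare this

theorem gen_poly {F L : Type*} [Field F] [Field L] [Algebra F L] {θ : L} {r : F}
    (h : θ ^ 2 = algebraMap F L r) (g : F[X]) :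
    ∃ x y : F, aeval θ g = algebraMap F L x + algebraMap F L y * θ := by
  induction g using Polynomial.induction_on with
  | C a => exact ⟨a, 0, by simp⟩
  | add g1 g2 h1 h2 =>
    obtain ⟨x1, y1, e1⟩ := h1
    obtain ⟨x2, y2, e2⟩ := h2
    exact ⟨x1 + x2, y1 + y2, by rw [map_add, e1, e2]; simp only [map_add]; ring⟩
  | monomial n a ih =>
    obtain ⟨x, y, e⟩ := ih
    refine ⟨r * y, x, ?_⟩
    rw [pow_succ, ← mul_assoc, map_mul, e, aeval_X, map_mul, ← h]
    ring

theorem main {p : ℕ} (hp : p.Prime) {K : Type*} [Field K] [NumberField K]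
    (e : K ≃ₐ[ℚ] AdjoinRoot (X ^ 4 - C (p : ℚ))) :
    Nat.card {c : ClassGroup (𝓞 K) // c ^ 2 = 1} ≤ 2 := by
  have hp0 : (0 : ℝ) ≤ p := by positivity
  have hppos : (0 : ℝ) < p := by exact_mod_cast hp.pos
  -- the generator
  obtain ⟨θ, hθe⟩ : ∃ θ, e θ = AdjoinRoot.root _ := e.surjective _
  have hθ4 : θ ^ 4 = (p : K) := by
    apply e.injective
    rw [map_pow, hθe, map_natCast e p]
    have := AdjoinRoot.eval₂_root (X ^ 4 - C (p : ℚ))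
    rw [eval₂_sub, eval₂_pow, eval₂_X, eval₂_C, map_natCast (AdjoinRoot.of _) p] at this
    exact sub_eq_zero.1 this
  -- embeddings
  have emb : ∀ (A : Type) [Field A] [Algebra ℚ A] (a : A), a ^ 4 = (p : A) →
      ∃ f : K →+* A, f θ = a := by
    intro A _ _ a ha
    have hev : eval₂ (algebraMap ℚ A) a (X ^ 4 - C (p : ℚ)) = 0 := by simp [ha]
    refine ⟨(AdjoinRoot.lift (algebraMap ℚ A) a hev).comp e.toRingEquiv.toRingHom, ?_⟩
    change AdjoinRoot.lift _ _ hev (e θ) = a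
    rw [hθe, AdjoinRoot.lift_root]
  set r : ℝ := √(√p) with hr
  have hr2 : r ^ 2 = √p := Real.sq_sqrt (Real.sqrt_nonneg _)
  have hr4 : r ^ 4 = p := by
    rw [show r ^ 4 = (r ^ 2) ^ 2 by ring, hr2, Real.sq_sqrt hp0]
  have hrpos : 0 < r := Real.sqrt_pos.2 (Real.sqrt_pos.2 hppos)
  have hr4c : (r : ℂ) ^ 4 = p := by exact_mod_cast hr4
  obtain ⟨f0, hf0⟩ := emb ℝ r hr4
  obtain ⟨f1, hf1⟩ := emb ℂ r hr4c
  obtain ⟨f2, hf2⟩ := emb ℂ (-r) (by rw [← hr4c]; ring)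
  obtain ⟨f3, hf3⟩ := emb ℂ (Complex.I * r) (by rw [mul_pow, hr4c]; simp)
  have hrank := rank_ge f1 f2 f3 θ r hrpos hf1 hf2 hf3
  have hi : ∀ x : K, x ^ 2 ≠ -1 := by
    intro x hx
    have := congrArg f0 hx
    simp at this
    nlinarith [sq_nonneg (f0 x)]
  -- the quadratic subfield
  haveI : Fact (Irreducible (X ^ 2 - C (p : ℚ))) := ⟨irr_two hp⟩
  let k := AdjoinRoot (X ^ 2 - C (p : ℚ))
  have hq0 : (X ^ 2 - C (p : ℚ)) ≠ 0 := (irr_two hp).ne_zero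
  haveI : FiniteDimensional ℚ k := (AdjoinRoot.powerBasis hq0).finite
  haveI : NumberField k := { to_charZero := charZero_of_injective_algebraMap (algebraMap ℚ k).injective }
  let s : k := AdjoinRoot.root _
  have hs2 : s ^ 2 = (p : k) := by
    have := AdjoinRoot.eval₂_root (X ^ 2 - C (p : ℚ))
    rw [eval₂_sub, eval₂_pow, eval₂_X, eval₂_C, map_natCast (AdjoinRoot.of _) p] at this
    exact sub_eq_zero.1 this
  let ι : k →+* K := AdjoinRoot.lift (algebraMap ℚ K) (θ ^ 2) (by simp [← pow_mul, hθ4])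
  have hιs : ι s = θ ^ 2 := AdjoinRoot.lift_root _
  letI : Algebra k K := ι.toAlgebra
  have hk : Quad ℚ k s (p : ℚ) := by
    refine ⟨by simpa using hs2, ?_, ?_⟩
    · intro α
      obtain ⟨g, rfl⟩ := AdjoinRoot.mk_surjective α
      rw [← AdjoinRoot.aeval_eq]
      exact gen_poly (r := (p : ℚ)) (by simpa using hs2) g
    · intro hsq
      have := (Rat.isSquare_natCast_iff).1 hsq
      exact hp.prime.irreducible.not_isSquare this
  have hsint : IsIntegral ℤ s := ⟨X ^ 2 - C (p : ℤ), by monicity!, by simp [hs2]⟩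
  have hKq : Quad k K θ s := by
    refine ⟨hιs.symm, ?_, ?_⟩
    · intro α
      obtain ⟨g, hg⟩ := AdjoinRoot.mk_surjective (e α)
      have h1 : aeval θ (g.map (algebraMap ℚ k)) = α := by
        rw [aeval_def, eval₂_map,
          Subsingleton.elim ((algebraMap k K).comp (algebraMap ℚ k)) (algebraMap ℚ K), ← aeval_def]
        apply e.injective
        rw [← hg, ← AdjoinRoot.aeval_eq, ← hθe]
        exact (Polynomial.aeval_algHom_apply e.toAlgHom θ g).symm
      rw [← h1]
      exact gen_poly hιs.symm _
    · obtain ⟨ρ, hρ⟩ : ∃ ρ : 𝓞 k, (ρ : k) = s := ⟨⟨s, hsint⟩, rfl⟩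
      have hrN : (Ideal.absNorm (Ideal.span {ρ})).Prime := by
        rw [absNorm_root hk ρ hρ]; exact hp
      rw [← hρ]
      exact not_isSquare_of_norm hrN
  let φ : k →+* ℝ := AdjoinRoot.lift (algebraMap ℚ ℝ) (-√p) (by simp [Real.sq_sqrt hp0])
  have hφ : φ s < 0 := by
    have : φ s = -√p := AdjoinRoot.lift_root _
    rw [this]
    have := Real.sqrt_pos.2 hppos
    linarith
  obtain ⟨h0, h16⟩ := layer2 hp hk hKq φ hφ
  exact card_two_torsion hi hrank h0 h16
end PQ

theorem sylow_two_classGroup_pure_quartic_isCyclic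
    (p : ℕ) (hp : p.Prime)
    (K : Type*) [Field K] [NumberField K]
    (hK : Nonempty (K ≃ₐ[ℚ] AdjoinRoot (X ^ 4 - C (p : ℚ)))) :
    ∀ P : Sylow 2 (ClassGroup (𝓞 K)), IsCyclic P := by
  obtain ⟨e⟩ := hK
  exact PQ.cyclic_of_two (PQ.main hp e)
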